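/- Let V be a vertex operator algebra, W a generalized V-module, v ∈ V and w ∈ W homogeneous, and r, s ∈ ℕ such that L(−1)^r v ∈ V₊ and L(−1)^s w ∈ W₊. Then v_{−r−s−k} w ∈ C₁(W) for every integer k ≥ 1. -/

import Mathlib

noncomputable section

/-- The generalized binomial coefficient `C(m, i)` for `m ∈ ℤ`, `i ∈ ℕ`,
as a complex number: `m(m-1)⋯(m-i+1)/i!`. -/
def cchoose (m : ℤ) (i : ℕ) : ℂ :=
  (∏ j ∈ Finset.range i, ((m : ℂ) - (j : ℂ))) / (Nat.factorial i : ℂ)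

/-- A vertex operator algebra `V = ⊕ₙ V₍ₙ₎` over `ℂ`.  The vertex operator map is
recorded through its modes `op u n v = uₙ v` (so `Y(u,x)v = Σₙ uₙv x^{-n-1}`), with
vacuum `one`, conformal vector `omega` (with `L(k) = ω_{k+1}`), central charge `cc`,
weight grading `wtSpace` with projections `proj`.  The Jacobi identity is recorded in
the equivalent form of the Borcherds identity on modes. -/
structure VOA where
  carrier : Type
  [grp : AddCommGroup carrier]
  [mdl : Module ℂ carrier]
  op : carrier → ℤ → carrier → carrier
  one : carrier
  omega : carrier
  wtSpace : ℤ → Submodule ℂ carrier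
  proj : ℤ → carrier → carrier
  cc : ℂ
  op_linear_left : ∀ (n : ℤ) (w : carrier), IsLinearMap ℂ fun u => op u n w
  op_linear_right : ∀ (u : carrier) (n : ℤ), IsLinearMap ℂ (op u n)
  trunc : ∀ u v : carrier, ∃ N : ℤ, ∀ n : ℤ, N ≤ n → op u n v = 0
  one_op : ∀ (n : ℤ) (v : carrier), op one n v = if n = -1 then v else 0
  create_nonneg : ∀ (v : carrier) (n : ℤ), 0 ≤ n → op v n one = 0
  create : ∀ v : carrier, op v (-1) one = v
  borcherds : ∀ (u v w : carrier) (l m n : ℤ),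
    (∑ᶠ i : ℕ, cchoose m i • op (op u (l + (i : ℤ)) v) (m + n - (i : ℤ)) w)
      = ∑ᶠ i : ℕ, ((-1 : ℂ) ^ i * cchoose l i) •
          (op u (l + m - (i : ℤ)) (op v (n + (i : ℤ)) w)
            - ((-1 : ℂ) ^ l) • op v (l + n - (i : ℤ)) (op u (m + (i : ℤ)) w))
  proj_linear : ∀ n : ℤ, IsLinearMap ℂ (proj n)
  proj_mem : ∀ (n : ℤ) (v : carrier), proj n v ∈ wtSpace n
  proj_eq : ∀ n : ℤ, ∀ v ∈ wtSpace n, proj n v = v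
  proj_ne : ∀ m n : ℤ, m ≠ n → ∀ v ∈ wtSpace m, proj n v = 0
  proj_finite : ∀ v : carrier, (Function.support fun n => proj n v).Finite
  proj_sum : ∀ v : carrier, (∑ᶠ n : ℤ, proj n v) = v
  fd : ∀ n : ℤ, FiniteDimensional ℂ (wtSpace n)
  lower_trunc : ∃ N : ℤ, ∀ n : ℤ, n < N → wtSpace n = ⊥
  one_wt : one ∈ wtSpace 0
  omega_wt : omega ∈ wtSpace 2
  op_wt : ∀ k m n : ℤ, ∀ u ∈ wtSpace k, ∀ v ∈ wtSpace m, op u n v ∈ wtSpace (k + m - n - 1)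
  L_zero : ∀ n : ℤ, ∀ v ∈ wtSpace n, op omega 1 v = (n : ℂ) • v
  L_neg_one : ∀ (u : carrier) (n : ℤ) (w : carrier),
    op (op omega 0 u) n w = (-(n : ℂ)) • op u (n - 1) w
  virasoro : ∀ (m n : ℤ) (v : carrier),
    op omega (m + 1) (op omega (n + 1) v) - op omega (n + 1) (op omega (m + 1) v)
      = ((m : ℂ) - (n : ℂ)) • op omega (m + n + 1) v
        + (if m + n = 0 then (((m : ℂ) ^ 3 - (m : ℂ)) / 12) * cc else 0) • v

attribute [instance] VOA.grp VOA.mdl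

namespace VOA

variable (V : VOA)

/-- The Virasoro operator `L(k) = ω_{k+1}`. -/
def L (k : ℤ) (v : V.carrier) : V.carrier := V.op V.omega (k + 1) v

/-- The positive-weight part `V₊ = ⊕_{n ≥ 1} V₍ₙ₎`. -/
def pos : Submodule ℂ V.carrier := ⨆ (n : ℤ) (_ : 1 ≤ n), V.wtSpace n

/-- Zhu's subspace `C₂(V) = span{u₋₂v : u, v ∈ V}`. -/
def C2 : Submodule ℂ V.carrier :=
  Submodule.span ℂ {x : V.carrier | ∃ u v : V.carrier, x = V.op u (-2) v}

/-- The subspace `C₁(V) = span(v₋₁V₊ (v ∈ V₊) together with L(-1)V)`. -/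
def C1 : Submodule ℂ V.carrier :=
  Submodule.span ℂ
    ({x : V.carrier | ∃ u ∈ V.pos, ∃ v ∈ V.pos, x = V.op u (-1) v}
      ∪ {x : V.carrier | ∃ v : V.carrier, x = V.op V.omega 0 v})

/-- Iterated application of modes: `iterApply [(u¹,n₁),…,(uʳ,n_r)] w = u¹_{n₁} ⋯ uʳ_{n_r} w`. -/
def iterApply : List (V.carrier × ℤ) → V.carrier → V.carrier
  | [], w => w
  | p :: l, w => V.op p.1 p.2 (iterApply l w)

/-- `U ⊆ V` generates `V` as a vertex operator algebra:  `V` is linearly spanned by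
the elements `u¹_{n₁} ⋯ uʳ_{n_r} 1` with `uⁱ ∈ U`, `n_i ∈ ℤ`. -/
def generates (U : Set V.carrier) : Prop :=
  Submodule.span ℂ {x : V.carrier | ∃ l : List (V.carrier × ℤ),
    (∀ p ∈ l, p.1 ∈ U) ∧ x = V.iterApply l V.one} = ⊤

/-- `V` is finitely generated as a vertex operator algebra. -/
def FinitelyGenerated : Prop := ∃ S : Finset V.carrier, V.generates ↑S

end VOA

/-- A weak `V`-module: all axioms of a module (truncation, vacuum, Jacobi identity in
Borcherds form) except those involving gradings. -/
structure WeakModule (V : VOA) where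
  carrier : Type
  [grp : AddCommGroup carrier]
  [mdl : Module ℂ carrier]
  op : V.carrier → ℤ → carrier → carrier
  op_linear_left : ∀ (n : ℤ) (w : carrier), IsLinearMap ℂ fun u => op u n w
  op_linear_right : ∀ (u : V.carrier) (n : ℤ), IsLinearMap ℂ (op u n)
  trunc : ∀ (u : V.carrier) (w : carrier), ∃ N : ℤ, ∀ n : ℤ, N ≤ n → op u n w = 0
  one_op : ∀ (n : ℤ) (w : carrier), op V.one n w = if n = -1 then w else 0
  borcherds : ∀ (u v : V.carrier) (w : carrier) (l m n : ℤ),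
    (∑ᶠ i : ℕ, cchoose m i • op (V.op u (l + (i : ℤ)) v) (m + n - (i : ℤ)) w)
      = ∑ᶠ i : ℕ, ((-1 : ℂ) ^ i * cchoose l i) •
          (op u (l + m - (i : ℤ)) (op v (n + (i : ℤ)) w)
            - ((-1 : ℂ) ^ l) • op v (l + n - (i : ℤ)) (op u (m + (i : ℤ)) w))

attribute [instance] WeakModule.grp WeakModule.mdl

namespace WeakModule

variable {V : VOA} (W : WeakModule V)

/-- `L(0)` acting on a weak module, as a linear map. -/
def L0 : W.carrier →ₗ[ℂ] W.carrier := IsLinearMap.mk' _ (W.op_linear_right V.omega 1)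

/-- The `L(0)`-eigenspace of eigenvalue `h`. -/
def eig (h : ℂ) : Submodule ℂ W.carrier :=
  LinearMap.ker (W.L0 - h • (LinearMap.id : W.carrier →ₗ[ℂ] W.carrier))

/-- The coefficient `v*ₙ` of the adjoint vertex operator
`⟨Y*(v,x)α, w⟩ = ⟨α, Y(e^{xL(1)}(-x^{-2})^{L(0)}v, x^{-1})w⟩` acting on the full dual
space: for `v` homogeneous of weight `h`,
`(v*ₙ α)(w) = (-1)^h Σ_{i≥0} (1/i!) α((L(1)^i v)_{2h-n-i-2} w)`, extended to general
`v` via the weight-space projections. -/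
def dmode (v : V.carrier) (n : ℤ) (α : W.carrier → ℂ) (w : W.carrier) : ℂ :=
  ∑ᶠ h : ℤ, ∑ᶠ i : ℕ,
    ((-1 : ℂ) ^ h / (Nat.factorial i : ℂ)) *
      α (W.op ((V.L 1)^[i] (V.proj h v)) (2 * h - n - (i : ℤ) - 2) w)

/-- `D(W) ⊆ W*`: the linear functionals `α` on `W` such that for every `v ∈ V`,
`Y*(v,x)α ∈ W*((x))`, i.e. `v*ₙ α = 0` for `n` sufficiently large. -/
def DW : Set (W.carrier → ℂ) :=
  {α | IsLinearMap ℂ α ∧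
    ∀ v : V.carrier, ∃ N : ℤ, ∀ n : ℤ, N ≤ n → ∀ w : W.carrier, W.dmode v n α w = 0}

/-- A subspace stable under all modes of all vertex operators, i.e. a `V`-submodule. -/
def IsStable (S : Submodule ℂ W.carrier) : Prop :=
  ∀ (v : V.carrier) (n : ℤ), ∀ m ∈ S, W.op v n m ∈ S

/-- An irreducible (nonzero, no proper nonzero stable subspaces) `V`-submodule. -/
def IsIrreducibleSub (S : Submodule ℂ W.carrier) : Prop :=
  S ≠ ⊥ ∧ W.IsStable S ∧
    ∀ T : Submodule ℂ W.carrier, W.IsStable T → T ≤ S → T = ⊥ ∨ T = S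

/-- A stable subspace which is an ordinary module: `L(0)` acts semisimply on it with
finite-dimensional eigenspaces, and for each `h` the eigenvalues `h + m` do not occur
for `m` a sufficiently negative integer. -/
def IsOrdinarySub (S : Submodule ℂ W.carrier) : Prop :=
  S ≤ (⨆ h : ℂ, W.eig h ⊓ S) ∧ (∀ h : ℂ, FiniteDimensional ℂ ↥(W.eig h ⊓ S)) ∧
    ∀ h : ℂ, ∃ N : ℤ, ∀ m : ℤ, m ≤ N → W.eig (h + (m : ℂ)) ⊓ S = ⊥

/-- The weak module `W` is irreducible. -/
def IsIrreducible : Prop :=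
  (⊥ : Submodule ℂ W.carrier) ≠ ⊤ ∧
    ∀ S : Submodule ℂ W.carrier, W.IsStable S → S = ⊥ ∨ S = ⊤

/-- `Cₙ(W) = span{v₋ₙw : v ∈ V, w ∈ W}`. -/
def Cn (n : ℤ) : Submodule ℂ W.carrier :=
  Submodule.span ℂ {x : W.carrier | ∃ (v : V.carrier) (w : W.carrier), x = W.op v (-n) w}

/-- `B(W) = span(u₋₁W (u ∈ V₊) together with v₀W (v homogeneous, wt v ≥ 2))`. -/
def BW : Submodule ℂ W.carrier :=
  Submodule.span ℂ
    ({x : W.carrier | ∃ v ∈ V.pos, ∃ w : W.carrier, x = W.op v (-1) w}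
      ∪ {x : W.carrier | ∃ k : ℤ, 2 ≤ k ∧ ∃ v ∈ V.wtSpace k, ∃ w : W.carrier, x = W.op v 0 w})

/-- Zhu's subspace `O(W) = span{Σ_{i≥0} C(wt v, i) v_{i-2} w}` so that `A(W) = W/O(W)`. -/
def OW : Submodule ℂ W.carrier :=
  Submodule.span ℂ
    {x : W.carrier | ∃ (k : ℤ) (v : V.carrier), v ∈ V.wtSpace k ∧
      ∃ w : W.carrier, x = ∑ᶠ i : ℕ, cchoose k i • W.op v ((i : ℤ) - 2) w}

/-- A subspace `T ⊇ O(W)` of `W` is closed under the Frenkel–Zhu left and right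
`A(V)`-actions `v * w = Σᵢ C(wt v, i) v_{i-1} w` and `w * v = Σᵢ C(wt v - 1, i) v_{i-1} w`;
for `T ⊇ O(W)` this expresses that `T/O(W)` is an `A(V)`-sub-bimodule of `A(W)`. -/
def BimoduleClosed (T : Submodule ℂ W.carrier) : Prop :=
  ∀ k : ℤ, ∀ v ∈ V.wtSpace k, ∀ w ∈ T,
    (∑ᶠ i : ℕ, cchoose k i • W.op v ((i : ℤ) - 1) w) ∈ T ∧
    (∑ᶠ i : ℕ, cchoose (k - 1) i • W.op v ((i : ℤ) - 1) w) ∈ T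

/-- Equivalence (isomorphism) of weak modules. -/
def Equiv (M N : WeakModule V) : Prop :=
  ∃ e : M.carrier ≃ₗ[ℂ] N.carrier,
    ∀ (v : V.carrier) (n : ℤ) (w : M.carrier), e (M.op v n w) = N.op v n (e w)

end WeakModule

/-- `V` is of class 𝒜: `L(0)` acts semisimply on every weak `V`-module. -/
def VOA.classA (V : VOA) : Prop :=
  ∀ M : WeakModule V, (⨆ h : ℂ, M.eig h) = ⊤

/-- `V` is regular: every weak `V`-module is a direct sum of irreducible ordinary
`V`-modules. -/
def VOA.regular (V : VOA) : Prop :=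
  ∀ M : WeakModule V, ∃ (ι : Type) (S : ι → Submodule ℂ M.carrier),
    (∀ i, M.IsIrreducibleSub (S i) ∧ M.IsOrdinarySub (S i)) ∧
    (∀ i, Disjoint (S i) (⨆ (j : ι) (_ : j ≠ i), S j)) ∧ (⨆ i, S i) = ⊤

/-- A generalized `V`-module: a weak module with a semisimple `L(0)`-action, graded by
the `L(0)`-eigenvalues, with weight-space projections `projW`. -/
structure GenModule (V : VOA) extends WeakModule V where
  wt : ℂ → Submodule ℂ carrier
  projW : ℂ → carrier → carrier
  projW_linear : ∀ h : ℂ, IsLinearMap ℂ (projW h)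
  projW_mem : ∀ (h : ℂ) (w : carrier), projW h w ∈ wt h
  projW_eq : ∀ h : ℂ, ∀ w ∈ wt h, projW h w = w
  projW_ne : ∀ g h : ℂ, g ≠ h → ∀ w ∈ wt g, projW h w = 0
  projW_finite : ∀ w : carrier, (Function.support fun h => projW h w).Finite
  projW_sum : ∀ w : carrier, (∑ᶠ h : ℂ, projW h w) = w
  wt_L0 : ∀ h : ℂ, ∀ w ∈ wt h, op V.omega 1 w = h • w
  wt_op : ∀ k : ℤ, ∀ v ∈ V.wtSpace k, ∀ (h : ℂ) (n : ℤ), ∀ w ∈ wt h,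
    op v n w ∈ wt (h + (k : ℂ) - (n : ℂ) - 1)

/-- An ordinary `V`-module: a generalized module whose weight spaces are
finite-dimensional and whose weights are truncated from below in each coset `h + ℤ`. -/
structure OrdModule (V : VOA) extends GenModule V where
  wt_fd : ∀ h : ℂ, FiniteDimensional ℂ ↥(wt h)
  wt_lower : ∀ h : ℂ, ∃ N : ℤ, ∀ m : ℤ, m ≤ N → wt (h + (m : ℂ)) = ⊥

namespace GenModule

variable {V : VOA} (W : GenModule V)

/-- `W₊ = ⊕_{Re h > 0} W₍ₕ₎`. -/
def posW : Submodule ℂ W.carrier := ⨆ (h : ℂ) (_ : 0 < h.re), W.wt h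

/-- `C₁(W) = span(v₋₁W₊ (v ∈ V₊) together with L(-1)W)`. -/
def C1W : Submodule ℂ W.carrier :=
  Submodule.span ℂ
    ({x : W.carrier | ∃ v ∈ V.pos, ∃ w ∈ W.posW, x = W.op v (-1) w}
      ∪ {x : W.carrier | ∃ w : W.carrier, x = W.op V.omega 0 w})

/-- The restricted dual `W' = ⊕ₕ W₍ₕ₎* ⊆ W*`: the linear functionals vanishing on all
but finitely many weight spaces. -/
def restrictedDual : Set (W.carrier → ℂ) :=
  {α | IsLinearMap ℂ α ∧ {h : ℂ | ∃ w ∈ W.wt h, α w ≠ 0}.Finite}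

end GenModule

/-- `D(W)⁰`: the sum of the `L(0)`-eigenspaces of the weak module `D(W) ⊆ W*`, where
`L*(0) = ω*₁` acts on `α ∈ W*` by `(L*(0)α)(w) = α(L(0)w)`. -/
def OrdModule.DW0 {V : VOA} (W : OrdModule V) : Set (W.carrier → ℂ) :=
  {α | ∃ (S : Finset ℂ) (f : ℂ → (W.carrier → ℂ)),
    (∀ h ∈ S, f h ∈ W.toWeakModule.DW ∧
      ∀ w : W.carrier, f h (W.op V.omega 1 w) = h * f h w) ∧
    α = ∑ h ∈ S, f h}

/-- An ℕ-gradable weak `V`-module: a weak module with an ℕ-grading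
`W = ⊕_{n∈ℕ} W(n)` with `v_m W(n) ⊆ W(wt v + n - m - 1)` (graded pieces of negative
index are zero). -/
structure NGradedModule (V : VOA) extends WeakModule V where
  gr : ℤ → Submodule ℂ carrier
  gr_neg : ∀ n : ℤ, n < 0 → gr n = ⊥
  gr_sup : (⨆ n : ℤ, gr n) = ⊤
  gr_indep : ∀ n : ℤ, Disjoint (gr n) (⨆ (m : ℤ) (_ : m ≠ n), gr m)
  gr_op : ∀ k : ℤ, ∀ v ∈ V.wtSpace k, ∀ m n : ℤ, ∀ w ∈ gr n,
    op v m w ∈ gr (k + n - m - 1)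

/-- An intertwining operator of type `(W₃; W₁ W₂)` in the sense of
Frenkel–Huang–Lepowsky, recorded through its complex-indexed modes
`I w₁ h w₂ = (w₁)ₕ w₂` (so `Y(w₁,x)w₂ = Σ_{h∈ℂ} (w₁)ₕ w₂ x^{-h-1}`):
linearity, truncation, the `L(-1)`-derivative property, and the Jacobi identity in
component (Borcherds) form. -/
def IsIntertwiner {V : VOA} (W1 W2 W3 : OrdModule V)
    (I : W1.carrier → ℂ → W2.carrier → W3.carrier) : Prop :=
  (∀ (h : ℂ) (w2 : W2.carrier), IsLinearMap ℂ fun w1 => I w1 h w2) ∧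
  (∀ (w1 : W1.carrier) (h : ℂ), IsLinearMap ℂ (I w1 h)) ∧
  (∀ (w1 : W1.carrier) (w2 : W2.carrier) (h : ℂ),
    ∃ N : ℤ, ∀ n : ℤ, N ≤ n → I w1 (h + (n : ℂ)) w2 = 0) ∧
  (∀ (w1 : W1.carrier) (h : ℂ) (w2 : W2.carrier),
    I (W1.op V.omega 0 w1) h w2 = (-h) • I w1 (h - 1) w2) ∧
  (∀ (u : V.carrier) (w1 : W1.carrier) (w2 : W2.carrier) (l m : ℤ) (h : ℂ),
    (∑ᶠ i : ℕ, cchoose m i • I (W1.op u (l + (i : ℤ)) w1) ((m : ℂ) + h - (i : ℂ)) w2)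
      = ∑ᶠ i : ℕ, ((-1 : ℂ) ^ i * cchoose l i) •
          (W3.op u (l + m - (i : ℤ)) (I w1 (h + (i : ℂ)) w2)
            - ((-1 : ℂ) ^ l) • I w1 ((l : ℂ) + h - (i : ℂ)) (W2.op u (m + (i : ℤ)) w2)))

/-- The fusion rule `dim I(W₃; W₁W₂)` is finite: the space of intertwining operators of
the indicated type is finite-dimensional. -/
def FusionFinite {V : VOA} (W1 W2 W3 : OrdModule V) : Prop :=
  FiniteDimensional ℂ
    ↥(Submodule.span ℂ {I : W1.carrier → ℂ → W2.carrier → W3.carrier |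
        IsIntertwiner W1 W2 W3 I})

end

/-!
`L(-1)` lowers the index of a mode: `(L(-1)u)ₙ = -n uₙ₋₁`, and `L(-1)(uₙw) = (L(-1)u)ₙw + uₙL(-1)w`.
Hence, for `n < 0` and modulo `L(-1)W ⊆ C₁(W)`, moving `L(-1)` onto either `u` or `w` in `uₙw` has
up to a nonzero scalar the effect of replacing `n` by `n - 1`.  So `v_{-r-s-k} w` is, up to such a
scalar, congruent to `(L(-1)^{r+k-1} v)₋₁ L(-1)^s w`.  This lies in `C₁(W)` because `L(-1)`
preserves `V₊`.
-/

theorem cchoose_eq_ringChoose (m : ℤ) (i : ℕ) : cchoose m i = Ring.choose (m : ℂ) i := by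
  rw [Ring.choose_eq_smul, ← Polynomial.aeval_eq_smeval, Polynomial.aeval_def,
    ← Polynomial.eval_map, descPochhammer_map, descPochhammer_eval_eq_prod_range, smul_eq_mul,
    inv_mul_eq_div, cchoose]

theorem cchoose_zero_right (m : ℤ) : cchoose m 0 = 1 := by
  rw [cchoose_eq_ringChoose, Ring.choose_zero_right]

theorem cchoose_zero_left {i : ℕ} (hi : i ≠ 0) : cchoose 0 i = 0 := by
  rw [cchoose_eq_ringChoose, Int.cast_zero, Ring.choose_zero_pos ℂ (Nat.pos_of_ne_zero hi)]

theorem neg_one_pow_mul_cchoose_neg_two (i : ℕ) : (-1 : ℂ) ^ i * cchoose (-2) i = i + 1 := by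
  have h : cchoose (-2) i = (-1) ^ i * ((i : ℂ) + 1) := by
    rw [cchoose_eq_ringChoose, Int.cast_neg, Int.cast_ofNat, Ring.choose_neg',
      Ring.multichoose_two]
    simp [Units.smul_def, mul_add]
  rw [h, ← mul_assoc, ← mul_pow, neg_one_mul, neg_neg, one_pow, one_mul]

namespace VOA

variable (V : VOA)

theorem L_neg_one_eq_op_omega_zero : V.L (-1) = V.op V.omega 0 := rfl

theorem op_omega_zero_eq_op_neg_two_one (u : V.carrier) :
    V.op V.omega 0 u = V.op u (-2) V.one := by
  simpa [V.create] using V.L_neg_one u (-1) V.one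

theorem mapsTo_op_omega_zero_pos : Set.MapsTo (V.op V.omega 0) V.pos V.pos := by
  suffices V.pos ≤ V.pos.comap (IsLinearMap.mk' _ (V.op_linear_right V.omega 0)) from this
  refine iSup₂_le fun n hn u hu => ?_
  exact Submodule.mem_iSup_of_mem (2 + n - 0 - 1) <|
    Submodule.mem_iSup_of_mem (by omega) (V.op_wt 2 n 0 V.omega V.omega_wt u hu)

end VOA

namespace WeakModule

variable {V : VOA} (W : WeakModule V)

theorem op_zero_right (u : V.carrier) (n : ℤ) : W.op u n 0 = 0 :=
  (W.op_linear_right u n).map_zero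

theorem op_op_eq_finsum (u v : V.carrier) (w : W.carrier) (l n : ℤ) :
    W.op (V.op u l v) n w = ∑ᶠ i : ℕ, ((-1 : ℂ) ^ i * cchoose l i) •
      (W.op u (l - i) (W.op v (n + i) w) - (-1 : ℂ) ^ l • W.op v (l + n - i) (W.op u i w)) := by
  have h := W.borcherds u v w l 0 n
  rw [finsum_eq_single _ 0 fun i hi => by rw [cchoose_zero_left hi, zero_smul]] at h
  simpa [cchoose_zero_right] using h

theorem op_op_zero (u v : V.carrier) (n : ℤ) (w : W.carrier) :
    W.op (V.op u 0 v) n w = W.op u 0 (W.op v n w) - W.op v n (W.op u 0 w) := by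
  rw [op_op_eq_finsum,
    finsum_eq_single _ 0 fun i hi => by rw [cchoose_zero_left hi, mul_zero, zero_smul]]
  simp [cchoose_zero_right]

theorem op_op_omega_zero (u : V.carrier) (n : ℤ) (w : W.carrier) :
    W.op (V.op V.omega 0 u) n w = (-(n : ℂ)) • W.op u (n - 1) w := by
  have hsign : (-1 : ℂ) ^ (-2 : ℤ) = 1 := by norm_num
  rw [V.op_omega_zero_eq_op_neg_two_one, op_op_eq_finsum]
  simp only [neg_one_pow_mul_cchoose_neg_two, W.one_op, hsign, one_smul]
  -- As `1ₘ = δ_{m,-1}`, only `i = -n - 1` (for `n < 0`) or `i = n - 1` (for `n > 0`) contributes.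
  have hvanish (i : ℕ) (hneg : n + i ≠ -1) (hpos : -2 + n - i ≠ -1) :
      ((i : ℂ) + 1) • (W.op u (-2 - i) (if n + i = -1 then w else 0)
        - if -2 + n - i = -1 then W.op u i w else 0) = 0 := by
    rw [if_neg hneg, if_neg hpos, W.op_zero_right, sub_zero, smul_zero]
  rcases lt_trichotomy n 0 with hn | rfl | hn
  · obtain ⟨j, rfl⟩ : ∃ j : ℕ, n = -j - 1 := ⟨(-n - 1).toNat, by omega⟩
    rw [finsum_eq_single _ j fun i hi => hvanish i (by omega) (by omega), if_pos (by ring),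
      if_neg (by omega), sub_zero]
    congr 1
    · push_cast; ring
    · congr 1; ring
  · rw [finsum_eq_zero_of_forall_eq_zero fun i => hvanish i (by omega) (by omega), Int.cast_zero,
      neg_zero, zero_smul]
  · obtain ⟨j, rfl⟩ : ∃ j : ℕ, n = j + 1 := ⟨(n - 1).toNat, by omega⟩
    rw [finsum_eq_single _ j fun i hi => hvanish i (by omega) (by omega), if_neg (by omega),
      if_pos (by ring), W.op_zero_right, zero_sub, smul_neg, ← neg_smul]
    congr 1
    · push_cast; ring
    · congr 1; ring

variable {W} {C : Submodule ℂ W.carrier}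

theorem op_op_omega_zero_mem_iff {u : V.carrier} {n : ℤ} {w : W.carrier} (hn : n ≠ 0) :
    W.op (V.op V.omega 0 u) n w ∈ C ↔ W.op u (n - 1) w ∈ C := by
  rw [W.op_op_omega_zero, C.smul_mem_iff (neg_ne_zero.mpr (Int.cast_ne_zero.mpr hn))]

theorem op_apply_op_omega_zero_mem_iff (hC : ∀ x, W.op V.omega 0 x ∈ C) {u : V.carrier} {n : ℤ}
    {w : W.carrier} (hn : n ≠ 0) :
    W.op u n (W.op V.omega 0 w) ∈ C ↔ W.op u (n - 1) w ∈ C := by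
  rw [← op_op_omega_zero_mem_iff hn, W.op_op_zero, C.sub_mem_iff_right (hC _)]

theorem op_iterate_op_omega_zero_mem_iff {u : V.carrier} {n : ℤ} {w : W.carrier} (hn : n < 0)
    (j : ℕ) : W.op ((V.op V.omega 0)^[j] u) n w ∈ C ↔ W.op u (n - j) w ∈ C := by
  induction j generalizing u with
  | zero => simp
  | succ j ih =>
    rw [Function.iterate_succ_apply, ih, op_op_omega_zero_mem_iff (by omega), sub_sub,
      Nat.cast_succ]

theorem op_apply_iterate_op_omega_zero_mem_iff (hC : ∀ x, W.op V.omega 0 x ∈ C) {u : V.carrier}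
    {n : ℤ} {w : W.carrier} (hn : n < 0) (j : ℕ) :
    W.op u n ((W.op V.omega 0)^[j] w) ∈ C ↔ W.op u (n - j) w ∈ C := by
  induction j generalizing w with
  | zero => simp
  | succ j ih =>
    rw [Function.iterate_succ_apply, ih, op_apply_op_omega_zero_mem_iff hC (by omega), sub_sub,
      Nat.cast_succ]

end WeakModule

namespace GenModule

variable {V : VOA} (W : GenModule V)

theorem op_neg_one_mem_C1W {v : V.carrier} {w : W.carrier} (hv : v ∈ V.pos) (hw : w ∈ W.posW) :
    W.op v (-1) w ∈ W.C1W :=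
  Submodule.subset_span (Or.inl ⟨v, hv, w, hw, rfl⟩)

theorem op_omega_zero_mem_C1W (w : W.carrier) : W.op V.omega 0 w ∈ W.C1W :=
  Submodule.subset_span (Or.inr ⟨w, rfl⟩)

end GenModule

theorem mode_mem_C1W_general (V : VOA) (W : GenModule V) (v : V.carrier) (w : W.carrier)
    (r s : ℕ) (hr : (V.L (-1))^[r] v ∈ V.pos)
    (hs : (fun u => W.op V.omega 0 u)^[s] w ∈ W.posW) (k : ℤ) (hk : 1 ≤ k) :
    W.op v (-(r : ℤ) - (s : ℤ) - k) w ∈ W.C1W := by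
  obtain ⟨j, rfl⟩ : ∃ j : ℕ, k = j + 1 := ⟨(k - 1).toNat, by omega⟩
  have hpos : (V.op V.omega 0)^[j + r] v ∈ V.pos := by
    rw [Function.iterate_add_apply]
    exact V.mapsTo_op_omega_zero_pos.iterate j (V.L_neg_one_eq_op_omega_zero ▸ hr)
  have hindex : -(r : ℤ) - s - (j + 1) = -1 - s - (j + r : ℕ) := by push_cast; ring
  rw [hindex, ← WeakModule.op_iterate_op_omega_zero_mem_iff (by omega),
    ← WeakModule.op_apply_iterate_op_omega_zero_mem_iff W.op_omega_zero_mem_C1W (by omega)]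
  exact W.op_neg_one_mem_C1W hpos hs

/-- Let `W` be a generalized `V`-module, `v ∈ V` and `w ∈ W`
homogeneous, and `r, s ∈ ℕ` such that `L(-1)^r v ∈ V₊` and `L(-1)^s w ∈ W₊`.  Then
`v_{-r-s-k} w ∈ C₁(W)` for every integer `k ≥ 1`. -/
theorem mode_mem_C1W (V : VOA) (W : GenModule V)
    (v : V.carrier) (w : W.carrier)
    (p : ℤ) (hv : v ∈ V.wtSpace p) (h : ℂ) (hw : w ∈ W.wt h)
    (r s : ℕ)
    (hr : (V.L (-1))^[r] v ∈ V.pos)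
    (hs : (fun u => W.op V.omega 0 u)^[s] w ∈ W.posW) :
    ∀ k : ℤ, 1 ≤ k → W.op v (-(r : ℤ) - (s : ℤ) - k) w ∈ W.C1W := by
  exact mode_mem_C1W_general V W v w r s hr hs
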